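/- Let μ be a finite positive Borel measure on [0,1). The following conditions are equivalent: (i) the operator I_μ is well defined on Λ²_{1/2} and bounded from Λ²_{1/2} into itself; (ii) the operator H_μ is well defined on Λ²_{1/2} and bounded from Λ²_{1/2} into itself; (iii) μ is a 1-logarithmic 1-Carleson measure. -/

import Mathlib

open MeasureTheory Set Metric ENNReal

noncomputable section

namespace PaperHankel

/-- The moment of order `n` of a measure on `[0,1)`:  `μ_n = ∫_{[0,1)} t^n dμ(t)`. -/
def mom (μ : Measure ℝ) (n : ℕ) : ℝ := ∫ t in Ico (0:ℝ) 1, t ^ n ∂μ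

/-- The `n`-th Taylor coefficient of `f` at `0`. -/
def tc (f : ℂ → ℂ) (n : ℕ) : ℂ := iteratedDeriv n f 0 / n.factorial

/-- The `n`-th Taylor coefficient of `H_μ f`, namely `∑_k μ_{n+k} a_k`. -/
def hmuCoeff (μ : Measure ℝ) (f : ℂ → ℂ) (n : ℕ) : ℂ :=
  ∑' k : ℕ, (mom μ (n + k) : ℂ) * tc f k

/-- `H_μ f` is well defined: each coefficient series converges absolutely, and the resulting
power series has radius of convergence at least `1`. -/
def HmuWD (μ : Measure ℝ) (f : ℂ → ℂ) : Prop :=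
  (∀ n : ℕ, Summable fun k : ℕ => ‖(mom μ (n + k) : ℂ) * tc f k‖) ∧
  ∀ z ∈ ball (0:ℂ) 1, Summable fun n : ℕ => ‖hmuCoeff μ f n * z ^ n‖

/-- The generalized Hilbert operator induced by the Hankel matrix of moments of `μ`. -/
def Hmu (μ : Measure ℝ) (f : ℂ → ℂ) : ℂ → ℂ :=
  fun z => ∑' n : ℕ, hmuCoeff μ f n * z ^ n

/-- `I_μ f` is well defined: the defining integral converges absolutely for every `z ∈ 𝔻`. -/
def ImuWD (μ : Measure ℝ) (f : ℂ → ℂ) : Prop :=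
  ∀ z ∈ ball (0:ℂ) 1, IntegrableOn (fun t : ℝ => f t / (1 - t * z)) (Ico (0:ℝ) 1) μ

/-- The integral operator `I_μ f (z) = ∫_{[0,1)} f(t)/(1-tz) dμ(t)`. -/
def Imu (μ : Measure ℝ) (f : ℂ → ℂ) : ℂ → ℂ :=
  fun z => ∫ t in Ico (0:ℝ) 1, f t / (1 - t * z) ∂μ

/-- The `p`-th circle mean `M_p(r,f)` raised into the Hardy norm shape:
`((1/2π) ∫_0^{2π} |f(r e^{iθ})|^p dθ)^{1/p}`. -/
def circMean (p : ℝ) (f : ℂ → ℂ) (r : ℝ) : ℝ :=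
  ((2 * Real.pi)⁻¹ * ∫ θ in (0:ℝ)..(2 * Real.pi),
      ‖f (r * Complex.exp (θ * Complex.I))‖ ^ p) ^ (1 / p)

/-- Membership in the Hardy space `H^p`. -/
def MemHardy (p : ℝ) (f : ℂ → ℂ) : Prop :=
  DifferentiableOn ℂ f (ball (0:ℂ) 1) ∧ ∃ M : ℝ, ∀ r ∈ Ico (0:ℝ) 1, circMean p f r ≤ M

/-- The `H^p` norm. -/
def hardyNorm (p : ℝ) (f : ℂ → ℂ) : ℝ :=
  sSup {x : ℝ | ∃ r ∈ Ico (0:ℝ) 1, x = circMean p f r}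

/-- Membership in `H^∞`: analytic and bounded on the unit disc. -/
def MemHinf (f : ℂ → ℂ) : Prop :=
  DifferentiableOn ℂ f (ball (0:ℂ) 1) ∧ ∃ M : ℝ, ∀ z ∈ ball (0:ℂ) 1, ‖f z‖ ≤ M

/-- The `H^∞` norm. -/
def hinfNorm (f : ℂ → ℂ) : ℝ := sSup {x : ℝ | ∃ z ∈ ball (0:ℂ) 1, x = ‖f z‖}

/-- The mean `M_2(r,g) = ((1/2π) ∫_0^{2π} |g(r e^{iθ})|² dθ)^{1/2}`. -/
def M2 (g : ℂ → ℂ) (r : ℝ) : ℝ :=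
  Real.sqrt ((2 * Real.pi)⁻¹ * ∫ θ in (0:ℝ)..(2 * Real.pi),
      ‖g (r * Complex.exp (θ * Complex.I))‖ ^ 2)

/-- Membership in the mean Lipschitz space `Λ²_{1/2}`:
`M_2(r,f') = O((1-r)^{-1/2})` as `r → 1⁻`. -/
def MemLambda (f : ℂ → ℂ) : Prop :=
  DifferentiableOn ℂ f (ball (0:ℂ) 1) ∧
  ∃ C : ℝ, ∀ r ∈ Ico (0:ℝ) 1, Real.sqrt (1 - r) * M2 (deriv f) r ≤ C

/-- The norm on `Λ²_{1/2}`. -/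
def lambdaNorm (f : ℂ → ℂ) : ℝ :=
  ‖f 0‖ + sSup {x : ℝ | ∃ r ∈ Ico (0:ℝ) 1, x = Real.sqrt (1 - r) * M2 (deriv f) r}

/-- `∫_𝔻 |f'(z)|² g(z,a)^s dA(z)` with `g(z,a) = log |(1- ā z)/(z-a)|` and `dA` the
normalized area measure, computed as a lower integral in `[0,∞]`. -/
def qsInt (s : ℝ) (f : ℂ → ℂ) (a : ℂ) : ℝ≥0∞ :=
  (ENNReal.ofReal Real.pi)⁻¹ * ∫⁻ z in ball (0:ℂ) 1,
    ENNReal.ofReal (‖deriv f z‖ ^ 2 * (Real.log ‖(1 - (starRingEnd ℂ) a * z) / (z - a)‖) ^ s)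

/-- Membership in `Q_s`: analytic on `𝔻` with `ρ_{Q_s}(f)² = sup_{a ∈ 𝔻} ∫ ... < ∞`. -/
def MemQs (s : ℝ) (f : ℂ → ℂ) : Prop :=
  DifferentiableOn ℂ f (ball (0:ℂ) 1) ∧ (⨆ a ∈ ball (0:ℂ) 1, qsInt s f a) < ⊤

/-- The norm on `Q_s`, `‖f‖ = |f(0)| + ρ_{Q_s}(f)`. -/
def qsNorm (s : ℝ) (f : ℂ → ℂ) : ℝ :=
  ‖f 0‖ + Real.sqrt (⨆ a ∈ ball (0:ℂ) 1, qsInt s f a).toReal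

/-- The condition `∫_{[0,1)} tⁿ log(1/(1-t)) dμ(t) = O(1/n)`, stated with the lower
integral so that in particular the integrals are finite. -/
def LogMomentBigO (μ : Measure ℝ) : Prop :=
  ∃ C > 0, ∀ n : ℕ, 1 ≤ n →
    (∫⁻ t in Ico (0:ℝ) 1, ENNReal.ofReal (t ^ n * Real.log (1 / (1 - t))) ∂μ) ≤
      ENNReal.ofReal (C / n)

/-- Membership in the Bloch space. -/
def MemBloch (f : ℂ → ℂ) : Prop :=
  DifferentiableOn ℂ f (ball (0:ℂ) 1) ∧
  ∃ M : ℝ, ∀ z ∈ ball (0:ℂ) 1, (1 - ‖z‖ ^ 2) * ‖deriv f z‖ ≤ M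

/-- The Bloch norm `‖f‖ = |f(0)| + ρ_B(f)`. -/
def blochNorm (f : ℂ → ℂ) : ℝ :=
  ‖f 0‖ + sSup {x : ℝ | ∃ z ∈ ball (0:ℂ) 1, x = (1 - ‖z‖ ^ 2) * ‖deriv f z‖}

/-- Membership in the Besov space `B^p`. -/
def MemBesov (p : ℝ) (f : ℂ → ℂ) : Prop :=
  DifferentiableOn ℂ f (ball (0:ℂ) 1) ∧
  IntegrableOn (fun z : ℂ => (1 - ‖z‖ ^ 2) ^ (p - 2) * ‖deriv f z‖ ^ p) (ball (0:ℂ) 1) volume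

/-- The Besov norm `‖f‖ = |f(0)| + ρ_p(f)`. -/
def besovNorm (p : ℝ) (f : ℂ → ℂ) : ℝ :=
  ‖f 0‖ + (Real.pi⁻¹ *
    ∫ z in ball (0:ℂ) 1, (1 - ‖z‖ ^ 2) ^ (p - 2) * ‖deriv f z‖ ^ p) ^ (1 / p)

/-- `μ` is an `α`-logarithmic `s`-Carleson measure on `[0,1)`. -/
def IsLogCarleson (μ : Measure ℝ) (α s : ℝ) : Prop :=
  ∃ C > 0, ∀ t ∈ Ico (0:ℝ) 1,
    (μ (Ico t 1)).toReal * Real.log (2 / (1 - t)) ^ α ≤ C * (1 - t) ^ s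

/-- `μ` is an `s`-Carleson measure on `[0,1)`. -/
def IsCarleson (μ : Measure ℝ) (s : ℝ) : Prop :=
  ∃ C > 0, ∀ t ∈ Ico (0:ℝ) 1, (μ (Ico t 1)).toReal ≤ C * (1 - t) ^ s


lemma tc_hasSum {f : ℂ → ℂ} (hf : DifferentiableOn ℂ f (ball (0:ℂ) 1)) {z : ℂ}
    (hz : z ∈ ball (0:ℂ) 1) : HasSum (fun n => tc f n * z ^ n) (f z) := by
  have h := Complex.hasSum_taylorSeries_on_ball hf hz
  have e : (fun n => tc f n * z ^ n) =
      fun n : ℕ => ((n.factorial : ℂ))⁻¹ • (z - 0) ^ n • iteratedDeriv n f 0 := by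
    funext n
    simp only [tc, sub_zero, smul_eq_mul]
    ring
  rw [e]
  exact h

lemma ofReal_mem {r : ℝ} (hr : r ∈ Ico (0:ℝ) 1) : (r : ℂ) ∈ ball (0:ℂ) 1 := by
  simp [abs_of_nonneg hr.1, hr.2]

lemma summable_abs_pow {c : ℕ → ℂ} {F : ℂ → ℂ}
    (hc : ∀ z ∈ ball (0:ℂ) 1, HasSum (fun n => c n * z ^ n) (F z)) {r : ℝ}
    (hr : r ∈ Ico (0:ℝ) 1) : Summable (fun n => ‖c n‖ * r ^ n) := by
  have := (hc _ (ofReal_mem hr)).summable.norm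
  simpa [abs_of_nonneg hr.1] using this

lemma diff_of_hasSum {c : ℕ → ℂ} {F : ℂ → ℂ}
    (hc : ∀ z ∈ ball (0:ℂ) 1, HasSum (fun n => c n * z ^ n) (F z)) :
    DifferentiableOn ℂ F (ball (0:ℂ) 1) := by
  intro z hz
  have hz' : ‖z‖ < 1 := by simpa using hz
  obtain ⟨ρ, h1, h2⟩ := exists_between hz'
  have hρ : ρ ∈ Ico (0:ℝ) 1 := ⟨(norm_nonneg z).trans h1.le, h2⟩
  have hs := summable_abs_pow hc hρ
  have hd := Complex.differentiableOn_tsum_of_summable_norm (F := fun n w => c n * w ^ n)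
    (U := ball (0:ℂ) ρ) hs (fun i => by fun_prop) isOpen_ball (by
      intro i w hw
      have : ‖w‖ ≤ ρ := by simpa using (mem_ball_zero_iff.1 hw).le
      rw [norm_mul, norm_pow]
      gcongr)
  have hd2 : DifferentiableOn ℂ F (ball (0:ℂ) ρ) := by
    refine hd.congr ?_
    intro w hw
    exact (hc w (ball_subset_ball h2.le hw)).tsum_eq.symm
  exact (hd2.differentiableAt (isOpen_ball.mem_nhds (by simpa using h1))).differentiableWithinAt

lemma tc_of_hasSum {c : ℕ → ℂ} {F : ℂ → ℂ}
    (hc : ∀ z ∈ ball (0:ℂ) 1, HasSum (fun n => c n * z ^ n) (F z)) (n : ℕ) :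
    tc F n = c n := by
  have hd := diff_of_hasSum hc
  have key : ∀ d : ℕ → ℂ, (∀ z ∈ ball (0:ℂ) 1, HasSum (fun n => d n * z ^ n) (F z)) →
      HasFPowerSeriesAt F (FormalMultilinearSeries.ofScalars ℂ d) 0 := by
    intro d hd
    rw [hasFPowerSeriesAt_iff]
    filter_upwards [isOpen_ball.mem_nhds (mem_ball_self (x := (0:ℂ)) one_pos)] with z hz
    simpa [FormalMultilinearSeries.coeff_ofScalars, mul_comm] using hd z hz
  have h := (key _ hc).eq_formalMultilinearSeries (key _ (fun z hz => tc_hasSum hd hz))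
  have := congrArg (fun p => FormalMultilinearSeries.coeff p n) h
  simpa [FormalMultilinearSeries.coeff_ofScalars] using this.symm

lemma tc_deriv (f : ℂ → ℂ) (n : ℕ) : tc (deriv f) n = (n + 1) * tc f (n + 1) := by
  simp only [tc, iteratedDeriv_succ', Nat.factorial_succ]
  push_cast
  have : (n : ℂ) + 1 ≠ 0 := by exact_mod_cast Nat.succ_ne_zero n
  have : (n.factorial : ℂ) ≠ 0 := by exact_mod_cast n.factorial_ne_zero
  field_simp

lemma deriv_hasSum {f : ℂ → ℂ} (hf : DifferentiableOn ℂ f (ball (0:ℂ) 1)) :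
    ∀ z ∈ ball (0:ℂ) 1, HasSum (fun n : ℕ => ((n + 1) * tc f (n + 1)) * z ^ n) (deriv f z) := by
  intro z hz
  simp_rw [← tc_deriv]
  exact tc_hasSum (hf.deriv isOpen_ball) hz

lemma int_exp (n m : ℕ) : ∫ θ in (0:ℝ)..(2 * Real.pi),
    (Complex.exp (θ * Complex.I)) ^ n * (starRingEnd ℂ) ((Complex.exp (θ * Complex.I)) ^ m)
      = if n = m then (2 * Real.pi : ℂ) else 0 := by
  have h : ∀ θ : ℝ, (Complex.exp (θ * Complex.I)) ^ n *
      (starRingEnd ℂ) ((Complex.exp (θ * Complex.I)) ^ m)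
      = Complex.exp ((((n:ℂ) - m) * Complex.I) * θ) := by
    intro θ
    rw [map_pow, ← Complex.exp_conj, ← Complex.exp_nat_mul, ← Complex.exp_nat_mul, ← Complex.exp_add]
    congr 1
    simp
    ring
  simp_rw [h]
  split_ifs with hnm
  · subst hnm; simp
  · have h0 : ((n:ℂ) - m) ≠ 0 := by
      rw [sub_ne_zero]; exact_mod_cast hnm
    rw [integral_exp_mul_complex (mul_ne_zero h0 Complex.I_ne_zero)]
    have : Complex.exp (((n:ℂ) - m) * Complex.I * ((2 * Real.pi : ℝ) : ℂ)) = 1 := by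
      rw [Complex.exp_eq_one_iff]
      exact ⟨(n : ℤ) - m, by push_cast; ring⟩
    rw [this]; simp

lemma dbl_sum (u : ℕ → ℝ → ℂ) (G : ℝ → ℂ) (b : ℕ → ℝ) (hb : ∀ n, 0 ≤ b n) (hs : Summable b)
    (hu : ∀ n θ, ‖u n θ‖ = b n) (huc : ∀ n, Continuous (u n))
    (hus : ∀ θ, HasSum (fun n => u n θ) (G θ)) :
    HasSum (fun p : ℕ × ℕ => ∫ θ in (0:ℝ)..(2 * Real.pi), u p.1 θ * (starRingEnd ℂ) (u p.2 θ))
      (∫ θ in (0:ℝ)..(2 * Real.pi), ((‖G θ‖ ^ 2 : ℝ) : ℂ)) := by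
  apply intervalIntegral.hasSum_integral_of_dominated_convergence
    (fun p _ => b p.1 * b p.2)
  · intro p
    apply Continuous.aestronglyMeasurable
    exact (huc _).mul (Complex.continuous_conj.comp (huc _))
  · intro p
    refine Filter.Eventually.of_forall fun θ _ => ?_
    rw [norm_mul, RCLike.norm_conj, hu, hu]
  · refine Filter.Eventually.of_forall fun θ _ => ?_
    exact hs.mul_of_nonneg hs hb hb
  · simp
  · refine Filter.Eventually.of_forall fun θ _ => ?_
    have h1 := hus θ
    have h2 : HasSum (fun n => (starRingEnd ℂ) (u n θ)) ((starRingEnd ℂ) (G θ)) :=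
        (h1.map (starRingEnd ℂ) Complex.continuous_conj)
    have hh : Summable (fun n => ‖u n θ‖) := by simpa only [hu] using hs
    have hh2 : Summable (fun n => ‖(starRingEnd ℂ) (u n θ)‖) := by
      simpa only [RCLike.norm_conj] using hh
    have h33 : Summable (fun p : ℕ × ℕ => u p.1 θ * (starRingEnd ℂ) (u p.2 θ)) :=
      summable_mul_of_summable_norm (f := fun n => u n θ)
        (g := fun n => (starRingEnd ℂ) (u n θ)) hh hh2
    have h3 := HasSum.mul h1 h2 h33
    have h4 : ((‖G θ‖ ^ 2 : ℝ) : ℂ) = G θ * (starRingEnd ℂ) (G θ) := by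
      rw [Complex.mul_conj, Complex.normSq_eq_norm_sq]
    rw [h4]
    exact h3

lemma diag_int (c : ℕ → ℂ) (r : ℝ) (n m : ℕ) :
    (∫ θ in (0:ℝ)..(2 * Real.pi), (c n * (r * Complex.exp (θ * Complex.I)) ^ n) *
      (starRingEnd ℂ) (c m * (r * Complex.exp (θ * Complex.I)) ^ m))
      = if n = m then ((2 * Real.pi * (‖c n‖ ^ 2 * r ^ (2 * n)) : ℝ) : ℂ) else 0 := by
  have : ∀ θ : ℝ, (c n * (r * Complex.exp (θ * Complex.I)) ^ n) *
      (starRingEnd ℂ) (c m * (r * Complex.exp (θ * Complex.I)) ^ m) =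
    (c n * r ^ n * ((starRingEnd ℂ) (c m) * r ^ m)) *
    ((Complex.exp (θ * Complex.I)) ^ n *
      (starRingEnd ℂ) ((Complex.exp (θ * Complex.I)) ^ m)) := by
    intro θ
    simp only [map_mul, map_pow, mul_pow, Complex.conj_ofReal]
    ring
  simp_rw [this]
  rw [intervalIntegral.integral_const_mul, int_exp]
  split_ifs with h
  · rw [← h]
    have : c n * (starRingEnd ℂ) (c n) = ((‖c n‖ ^ 2 : ℝ) : ℂ) := by
      rw [Complex.mul_conj, Complex.normSq_eq_norm_sq]
    push_cast at this ⊢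
    rw [← this]; ring
  · simp

lemma diag_sum {d : ℕ → ℝ} {I : ℝ}
    (h : HasSum (fun p : ℕ × ℕ => if p.1 = p.2 then ((2 * Real.pi * d p.1 : ℝ) : ℂ) else 0)
      (I : ℂ)) : HasSum d ((2 * Real.pi)⁻¹ * I) := by
  have hinj : Function.Injective (fun n : ℕ => (n, n)) := fun a b h => by simpa using h
  rw [← hinj.hasSum_iff (by
    intro x hx
    rw [if_neg]
    rintro h
    exact hx ⟨x.1, by ext <;> simp [h]⟩)] at h
  simp only [Function.comp_def, if_true] at h
  have h4 := (Complex.hasSum_ofReal.1 h).mul_left ((2 * Real.pi)⁻¹)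
  have h5 : (fun n => (2 * Real.pi)⁻¹ * (2 * Real.pi * d n)) = d := by
    funext n
    field_simp
  rwa [h5] at h4

lemma parseval {c : ℕ → ℂ} {g : ℂ → ℂ}
    (hc : ∀ z ∈ ball (0:ℂ) 1, HasSum (fun n => c n * z ^ n) (g z)) {r : ℝ}
    (hr : r ∈ Ico (0:ℝ) 1) :
    HasSum (fun n => ‖c n‖ ^ 2 * r ^ (2 * n)) ((2 * Real.pi)⁻¹ * ∫ θ in (0:ℝ)..(2 * Real.pi),
      ‖g (r * Complex.exp (θ * Complex.I))‖ ^ 2) := by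
  have hdom := dbl_sum (fun n θ => c n * (r * Complex.exp (θ * Complex.I)) ^ n)
    (fun θ => g (r * Complex.exp (θ * Complex.I))) (fun n => ‖c n‖ * r ^ n)
    (fun n => mul_nonneg (norm_nonneg _) (pow_nonneg hr.1 _)) (summable_abs_pow hc hr)
    (by intro n θ; simp [Complex.norm_exp_ofReal_mul_I, abs_of_nonneg hr.1])
    (by intro n; fun_prop)
    (by
      intro θ
      apply hc
      simp [Complex.norm_exp_ofReal_mul_I, abs_of_nonneg hr.1, hr.2])
  simp_rw [diag_int] at hdom
  rw [intervalIntegral.integral_ofReal] at hdom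
  exact diag_sum hdom

/-- The seminorm part. -/
def lamSemi (f : ℂ → ℂ) : ℝ :=
  sSup {x : ℝ | ∃ r ∈ Ico (0:ℝ) 1, x = Real.sqrt (1 - r) * M2 (deriv f) r}

lemma lamSemi_bound {f : ℂ → ℂ} (hf : MemLambda f) {r : ℝ} (hr : r ∈ Ico (0:ℝ) 1) :
    Real.sqrt (1 - r) * M2 (deriv f) r ≤ lamSemi f := by
  obtain ⟨_, C, hC⟩ := hf
  apply le_csSup
  · refine ⟨C, ?_⟩
    rintro x ⟨r, hr, rfl⟩
    exact hC r hr
  · exact ⟨r, hr, rfl⟩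

lemma lamSemi_nonneg {f : ℂ → ℂ} (hf : MemLambda f) : 0 ≤ lamSemi f :=
  le_trans (mul_nonneg (Real.sqrt_nonneg _) (Real.sqrt_nonneg _))
    (lamSemi_bound hf (r := 0) ⟨le_rfl, one_pos⟩)

lemma M2_sq (g : ℂ → ℂ) (r : ℝ) : M2 g r ^ 2 = (2 * Real.pi)⁻¹ * ∫ θ in (0:ℝ)..(2 * Real.pi),
      ‖g (r * Complex.exp (θ * Complex.I))‖ ^ 2 := by
  apply Real.sq_sqrt
  apply mul_nonneg (by positivity)
  apply intervalIntegral.integral_nonneg (by positivity)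
  intro θ _
  positivity

lemma M2_hasSum {f : ℂ → ℂ} (hf : DifferentiableOn ℂ f (ball (0:ℂ) 1)) {r : ℝ}
    (hr : r ∈ Ico (0:ℝ) 1) :
    HasSum (fun n : ℕ => (((n:ℝ) + 1) * ‖tc f (n + 1)‖) ^ 2 * r ^ (2 * n)) (M2 (deriv f) r ^ 2) := by
  have h := parseval (deriv_hasSum hf) hr
  rw [← M2_sq] at h
  have e : ∀ n : ℕ, ‖((n:ℂ) + 1) * tc f (n + 1)‖ = ((n:ℝ) + 1) * ‖tc f (n + 1)‖ := by
    intro n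
    rw [norm_mul]
    congr 1
    exact_mod_cast Complex.norm_natCast (n + 1)
  simpa only [e] using h

lemma lam_partial {f : ℂ → ℂ} (hf : MemLambda f) {r : ℝ} (hr : r ∈ Ico (0:ℝ) 1) (N : ℕ) :
    (1 - r) * ∑ n ∈ Finset.range N, (((n:ℝ) + 1) * ‖tc f (n + 1)‖) ^ 2 * r ^ (2 * n)
      ≤ lamSemi f ^ 2 := by
  have h1 := sum_le_hasSum (Finset.range N) (fun i _ => mul_nonneg (sq_nonneg _)
    (pow_nonneg hr.1 _)) (M2_hasSum hf.1 hr)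
  have hr1 : 0 < 1 - r := by linarith [hr.2]
  calc _ ≤ (1 - r) * M2 (deriv f) r ^ 2 := by gcongr
    _ = (Real.sqrt (1 - r) * M2 (deriv f) r) ^ 2 := by
      rw [mul_pow, Real.sq_sqrt hr1.le]
    _ ≤ _ := by
      gcongr
      · exact mul_nonneg (Real.sqrt_nonneg _) (Real.sqrt_nonneg _)
      · exact lamSemi_bound hf hr

lemma memLambda_of_coef {c : ℕ → ℂ} {F : ℂ → ℂ}
    (hc : ∀ z ∈ ball (0:ℂ) 1, HasSum (fun n => c n * z ^ n) (F z)) {B : ℝ} (hB : 0 ≤ B)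
    (hcB : ∀ n : ℕ, ((n:ℝ) + 1) * ‖c (n + 1)‖ ≤ B) :
    MemLambda F ∧ lambdaNorm F ≤ ‖c 0‖ + B := by
  have hd := diff_of_hasSum hc
  have key : ∀ r ∈ Ico (0:ℝ) 1, Real.sqrt (1 - r) * M2 (deriv F) r ≤ B := by
    intro r hr
    have hr1 : 0 < 1 - r := by linarith [hr.2]
    have h0 := hr.1
    have hr2 : r ^ 2 < 1 := by nlinarith [hr.2]
    have h1 := M2_hasSum hd hr
    have h2 : HasSum (fun n : ℕ => B ^ 2 * r ^ (2 * n)) (B ^ 2 * (1 - r ^ 2)⁻¹) := by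
      simp_rw [pow_mul]
      exact (hasSum_geometric_of_lt_one (sq_nonneg r) hr2).mul_left _
    have h3 : M2 (deriv F) r ^ 2 ≤ B ^ 2 * (1 - r ^ 2)⁻¹ := by
      refine hasSum_le ?_ h1 h2
      intro n
      rw [tc_of_hasSum hc]
      have := hcB n
      gcongr
    apply le_of_sq_le_sq _ hB
    rw [mul_pow, Real.sq_sqrt hr1.le]
    calc (1 - r) * M2 (deriv F) r ^ 2 ≤ (1 - r) * (B ^ 2 * (1 - r ^ 2)⁻¹) := by gcongr
      _ = B ^ 2 * (1 + r)⁻¹ := by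
        have : 1 - r ^ 2 = (1 - r) * (1 + r) := by ring
        rw [this]
        have : 1 + r ≠ 0 := by positivity
        field_simp
      _ ≤ B ^ 2 * 1 := by
        gcongr
        exact inv_le_one_of_one_le₀ (by linarith)
      _ = B ^ 2 := by ring
  refine ⟨⟨hd, B, key⟩, ?_⟩
  have hF0 : F 0 = c 0 := by
    have h := hc 0 (by simp)
    have h2 := hasSum_single (f := fun n => c n * (0:ℂ) ^ n) 0 (by intro n hn; simp [hn])
    simpa using h.unique h2
  unfold lambdaNorm
  rw [hF0]
  gcongr
  apply csSup_le
  · exact ⟨_, 0, ⟨le_rfl, one_pos⟩, rfl⟩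
  · rintro x ⟨r, hr, rfl⟩
    exact key r hr

lemma growth_deriv {f : ℂ → ℂ} (hf : MemLambda f) {s : ℝ} (hs : s ∈ Ico (0:ℝ) 1) (N : ℕ) :
    ∑ k ∈ Finset.range N, (((k:ℝ) + 1) * ‖tc f (k + 1)‖) * s ^ k ≤ 2 * lamSemi f / (1 - s) := by
  have hK := lamSemi_nonneg hf
  set ρ := Real.sqrt s with hρ
  have hρ2 : ρ ^ 2 = s := Real.sq_sqrt hs.1
  have hρ0 : 0 ≤ ρ := Real.sqrt_nonneg _
  have hρ1 : ρ < 1 := by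
    have := hs.2
    nlinarith
  have h1 := lam_partial hf ⟨hρ0, hρ1⟩ N
  have hs1 : 0 < 1 - s := by linarith [hs.2]
  have hcs := Finset.sum_mul_sq_le_sq_mul_sq (Finset.range N)
    (fun k => (((k:ℝ) + 1) * ‖tc f (k + 1)‖) * ρ ^ k) (fun k => ρ ^ k)
  have e1 : ∀ k : ℕ, (((k:ℝ) + 1) * ‖tc f (k + 1)‖) * ρ ^ k * ρ ^ k
      = (((k:ℝ) + 1) * ‖tc f (k + 1)‖) * s ^ k := by
    intro k; rw [← hρ2]; ring
  have e2 : ∀ k : ℕ, ((((k:ℝ) + 1) * ‖tc f (k + 1)‖) * ρ ^ k) ^ 2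
      = (((k:ℝ) + 1) * ‖tc f (k + 1)‖) ^ 2 * ρ ^ (2 * k) := by
    intro k; ring
  have e3 : ∀ k : ℕ, (ρ ^ k) ^ 2 = s ^ k := by
    intro k; rw [← hρ2]; ring
  simp_rw [e1, e2, e3] at hcs
  set D := ∑ k ∈ Finset.range N, (((k:ℝ) + 1) * ‖tc f (k + 1)‖) * s ^ k
  set A := ∑ k ∈ Finset.range N, (((k:ℝ) + 1) * ‖tc f (k + 1)‖) ^ 2 * ρ ^ (2 * k)
  have hA0 : 0 ≤ A := Finset.sum_nonneg fun k _ => by positivity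
  have hG : ∑ k ∈ Finset.range N, s ^ k ≤ (1 - s)⁻¹ :=
    sum_le_hasSum _ (fun i _ => pow_nonneg hs.1 _) (hasSum_geometric_of_lt_one hs.1 hs.2)
  have hA : (1 - s) * A ≤ 2 * lamSemi f ^ 2 := by
    have : 1 - s ≤ 2 * (1 - ρ) := by rw [← hρ2]; nlinarith
    nlinarith
  rw [le_div_iff₀ hs1]
  apply le_of_sq_le_sq _ (by positivity)
  have hG' : (1 - s) * ∑ k ∈ Finset.range N, s ^ k ≤ 1 := by
    calc _ ≤ (1 - s) * (1 - s)⁻¹ := by gcongr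
      _ = 1 := mul_inv_cancel₀ hs1.ne'
  have hG0 : 0 ≤ ∑ k ∈ Finset.range N, s ^ k := Finset.sum_nonneg fun k _ => pow_nonneg hs.1 _
  calc (D * (1 - s)) ^ 2 = D ^ 2 * (1 - s) ^ 2 := by ring
    _ ≤ (A * ∑ k ∈ Finset.range N, s ^ k) * (1 - s) ^ 2 := by gcongr
    _ = ((1 - s) * A) * ((1 - s) * ∑ k ∈ Finset.range N, s ^ k) := by ring
    _ ≤ (2 * lamSemi f ^ 2) * 1 := by gcongr
    _ ≤ (2 * lamSemi f) ^ 2 := by nlinarith [sq_nonneg (lamSemi f)]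

lemma growth0 {f : ℂ → ℂ} (hf : MemLambda f) {t : ℝ} (ht : t ∈ Ico (0:ℝ) 1) (N : ℕ) :
    ∑ k ∈ Finset.range N, ‖tc f (k + 1)‖ * t ^ (k + 1) ≤ 2 * lamSemi f * (-Real.log (1 - t)) := by
  let φ : ℝ → ℝ := fun s => 2 * lamSemi f * (-Real.log (1 - s)) -
    ∑ k ∈ Finset.range N, ‖tc f (k + 1)‖ * s ^ (k + 1)
  have hder : ∀ s ∈ Ico (0:ℝ) 1, HasDerivAt φ (2 * lamSemi f / (1 - s) -
      ∑ k ∈ Finset.range N, (((k:ℝ) + 1) * ‖tc f (k + 1)‖) * s ^ k) s := by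
    intro s hs
    have hs1 : 1 - s ≠ 0 := by linarith [hs.2]
    have h1 : HasDerivAt (fun s : ℝ => 2 * lamSemi f * (-Real.log (1 - s)))
        (2 * lamSemi f / (1 - s)) s := by
      have := ((((hasDerivAt_id s).const_sub 1).log hs1).neg).const_mul (2 * lamSemi f)
      refine HasDerivAt.congr_deriv (f := fun s : ℝ => 2 * lamSemi f * (-Real.log (1 - s))) this ?_
      simp only [id]
      ring
    refine h1.sub ?_
    apply HasDerivAt.fun_sum
    intro k _
    have := (hasDerivAt_pow (k + 1) s).const_mul ‖tc f (k + 1)‖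
    refine HasDerivAt.congr_deriv this ?_
    push_cast
    ring
  have hmono : MonotoneOn φ (Ico (0:ℝ) 1) := by
    apply monotoneOn_of_deriv_nonneg (convex_Ico 0 1)
    · exact fun s hs => (hder s hs).continuousAt.continuousWithinAt
    · intro s hs
      rw [interior_Ico] at hs
      exact (hder s ⟨hs.1.le, hs.2⟩).differentiableAt.differentiableWithinAt
    · intro s hs
      rw [interior_Ico] at hs
      have hs' : s ∈ Ico (0:ℝ) 1 := ⟨hs.1.le, hs.2⟩
      rw [(hder s hs').deriv]
      linarith [growth_deriv hf hs' N]
  have := hmono (left_mem_Ico.2 one_pos) ht ht.1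
  simp only [φ] at this
  simp at this
  linarith

/-- the log weight -/
def Lw (t : ℝ) : ℝ := Real.log (2 / (1 - t))

lemma Lw_eq {t : ℝ} (ht : t < 1) : Lw t = Real.log 2 + (-Real.log (1 - t)) := by
  unfold Lw
  rw [Real.log_div (by norm_num) (by linarith)]
  ring

lemma tc_zero (f : ℂ → ℂ) : tc f 0 = f 0 := by simp [tc]

lemma lambdaNorm_eq (f : ℂ → ℂ) : lambdaNorm f = ‖f 0‖ + lamSemi f := rfl

lemma growth {f : ℂ → ℂ} (hf : MemLambda f) {t : ℝ} (ht : t ∈ Ico (0:ℝ) 1) (N : ℕ) :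
    ∑ k ∈ Finset.range N, ‖tc f k‖ * t ^ k ≤ 2 * lambdaNorm f * Lw t := by
  have h1 : ∑ k ∈ Finset.range N, ‖tc f k‖ * t ^ k ≤
      ∑ k ∈ Finset.range (N + 1), ‖tc f k‖ * t ^ k := by
    apply Finset.sum_le_sum_of_subset_of_nonneg
    · exact Finset.range_mono (by omega)
    · intro i _ _
      exact mul_nonneg (norm_nonneg _) (pow_nonneg ht.1 _)
  rw [Finset.sum_range_succ'] at h1
  have h2 := growth0 hf ht N
  have hK := lamSemi_nonneg hf
  rw [Lw_eq ht.2, lambdaNorm_eq]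
  rw [tc_zero] at h1
  have hl : 0 ≤ -Real.log (1 - t) := by
    have := Real.log_nonpos (x := 1 - t) (by linarith [ht.2]) (by linarith [ht.1])
    linarith
  have hl2 := Real.log_two_gt_d9
  have := norm_nonneg (f 0)
  simp at h1
  nlinarith [mul_nonneg this hl, mul_nonneg hK hl]

lemma W_deriv (n : ℕ) (C u : ℝ) : HasDerivAt (fun u : ℝ => C * ((1 - Real.exp (-u)) ^ n
    - n / (n + 1) * (1 - Real.exp (-u)) ^ (n + 1) + 2 / (n + 1) * (1 - Real.exp (-u)) ^ (n + 1)))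
    (C * (n * (1 - Real.exp (-u)) ^ (n - 1) * Real.exp (-u) * Real.exp (-u)
      + 2 * (1 - Real.exp (-u)) ^ n * Real.exp (-u))) u := by
  have hx : HasDerivAt (fun u : ℝ => 1 - Real.exp (-u)) (Real.exp (-u)) u := by
    have := (((hasDerivAt_id u).neg).exp).const_sub 1
    refine HasDerivAt.congr_deriv this ?_
    simp
  have h1 := hx.fun_pow n
  have h2 := hx.fun_pow (n + 1)
  have h3 := (((h1.sub (h2.const_mul ((n:ℝ) / (n + 1)))).add
    (h2.const_mul ((2:ℝ) / (n + 1)))).const_mul C)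
  refine HasDerivAt.congr_deriv h3 ?_
  have hn : (n:ℝ) + 1 ≠ 0 := by positivity
  rcases n with _ | m
  · simp
  · push_cast
    have hn : (m:ℝ) + 1 + 1 ≠ 0 := by positivity
    field_simp
    ring

lemma H_deriv (n : ℕ) (u : ℝ) : HasDerivAt (fun u : ℝ => (1 - Real.exp (-u)) ^ n * (Real.log 2 + u))
    (n * (1 - Real.exp (-u)) ^ (n - 1) * Real.exp (-u) * (Real.log 2 + u)
      + (1 - Real.exp (-u)) ^ n) u := by
  have hx : HasDerivAt (fun u : ℝ => 1 - Real.exp (-u)) (Real.exp (-u)) u := by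
    have := (((hasDerivAt_id u).neg).exp).const_sub 1
    refine HasDerivAt.congr_deriv this ?_
    simp
  have h1 := hx.fun_pow n
  have h3 := h1.mul ((hasDerivAt_id u).const_add (Real.log 2))
  refine HasDerivAt.congr_deriv h3 ?_
  simp

lemma W_lintegral (n : ℕ) {C : ℝ} (hC : 0 < C) :
    ∫⁻ u in Ioi (0:ℝ), ENNReal.ofReal (C * (n * (1 - Real.exp (-u)) ^ (n - 1) * Real.exp (-u) *
      Real.exp (-u) + 2 * (1 - Real.exp (-u)) ^ n * Real.exp (-u)))
      ≤ ENNReal.ofReal (3 * C / (n + 1)) := by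
  have hpos : ∀ u ∈ Ioi (0:ℝ), 0 ≤ C * (n * (1 - Real.exp (-u)) ^ (n - 1) * Real.exp (-u) *
      Real.exp (-u) + 2 * (1 - Real.exp (-u)) ^ n * Real.exp (-u)) := by
    intro u hu
    have : 0 ≤ 1 - Real.exp (-u) := by
      have := Real.exp_le_one_iff.2 (neg_nonpos.2 (le_of_lt hu))
      linarith
    positivity
  have hlim : Filter.Tendsto (fun u : ℝ => C * ((1 - Real.exp (-u)) ^ n
    - n / (n + 1) * (1 - Real.exp (-u)) ^ (n + 1) + 2 / (n + 1) * (1 - Real.exp (-u)) ^ (n + 1)))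
      Filter.atTop (nhds (C * ((1 - 0) ^ n
    - n / (n + 1) * (1 - 0) ^ (n + 1) + 2 / (n + 1) * (1 - 0) ^ (n + 1)))) := by
    have he : Filter.Tendsto (fun u : ℝ => Real.exp (-u)) Filter.atTop (nhds 0) :=
      Real.tendsto_exp_neg_atTop_nhds_zero
    have hx := he.const_sub 1
    exact (((hx.pow n).sub ((hx.pow (n + 1)).const_mul _)).add
      ((hx.pow (n + 1)).const_mul _)).const_mul C
  have hint := integrableOn_Ioi_deriv_of_nonneg' (fun u _ => W_deriv n C u) hpos hlim
  have hval := integral_Ioi_of_hasDerivAt_of_nonneg' (fun u _ => W_deriv n C u) hpos hlim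
  rw [← ofReal_integral_eq_lintegral_ofReal hint
    ((ae_restrict_iff' measurableSet_Ioi).2 (Filter.Eventually.of_forall hpos)), hval]
  apply ENNReal.ofReal_le_ofReal
  have hn : (n:ℝ) + 1 ≠ 0 := by positivity
  have h0 : 0 ≤ C * (0:ℝ) ^ n := by positivity
  have : C * ((1 - 0) ^ n - n / (n + 1) * (1 - 0) ^ (n + 1) + 2 / (n + 1) * (1 - 0) ^ (n + 1))
      = 3 * C / ((n:ℝ) + 1) := by
    simp only [sub_zero, one_pow]
    field_simp
    ring
  rw [this]
  simp
  simpa using h0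

lemma carleson_int (μ : Measure ℝ) [IsFiniteMeasure μ] (h : IsLogCarleson μ 1 1) :
    ∃ A > 0, ∀ n : ℕ, ∫⁻ t in Ico (0:ℝ) 1, ENNReal.ofReal (t ^ n * Lw t) ∂μ
      ≤ ENNReal.ofReal (A / (n + 1)) := by
  obtain ⟨C, hC, hμ⟩ := h
  refine ⟨3 * C + Real.log 2 * (μ (Ico 0 1)).toReal, by positivity, fun n => ?_⟩
  set ν := μ.restrict (Ico (0:ℝ) 1) with hν
  have hl2 := Real.log_two_gt_d9
  let g : ℝ → ℝ := fun u => n * (1 - Real.exp (-u)) ^ (n - 1) * Real.exp (-u) * (Real.log 2 + u)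
      + (1 - Real.exp (-u)) ^ n
  have hgc : Continuous g := by fun_prop
  have hx0 : ∀ u : ℝ, 0 < u → 0 ≤ 1 - Real.exp (-u) := by
    intro u hu
    have := Real.exp_le_one_iff.2 (neg_nonpos.2 (le_of_lt hu))
    linarith
  have hlayer := lintegral_comp_eq_lintegral_meas_le_mul ν (f := fun t => -Real.log (1 - t)) (g := g)
    (by
      refine (ae_restrict_iff' measurableSet_Ico).2 (Filter.Eventually.of_forall fun t ht => ?_)
      have := Real.log_nonpos (x := 1 - t) (by linarith [ht.2]) (by linarith [ht.1])
      simpa using this)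
    (by fun_prop)
    (fun t _ => hgc.intervalIntegrable _ _)
    (by
      refine (ae_restrict_iff' measurableSet_Ioi).2 (Filter.Eventually.of_forall fun u hu => ?_)
      have h1 := hx0 u hu
      have h2 : 0 < u := hu
      simp only [g, Pi.zero_apply]
      positivity)
  have hle : ∫⁻ u in Ioi (0:ℝ), ν {t | u ≤ -Real.log (1 - t)} * ENNReal.ofReal (g u)
      ≤ ENNReal.ofReal (3 * C / (n + 1)) := by
    refine le_trans (setLIntegral_mono' measurableSet_Ioi ?_) (W_lintegral n hC)
    intro u hu
    have hu0 : 0 < u := hu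
    have h1 := hx0 u hu
    have hE := Real.exp_pos (-u)
    have hsub : ν {t | u ≤ -Real.log (1 - t)} ≤ μ (Ico (1 - Real.exp (-u)) 1) := by
      rw [hν, Measure.restrict_apply' measurableSet_Ico]
      apply measure_mono
      rintro t ⟨ht1, ht2⟩
      refine ⟨?_, ht2.2⟩
      have h3 : Real.log (1 - t) ≤ -u := by
        have : u ≤ -Real.log (1 - t) := ht1
        linarith
      have := (Real.log_le_iff_le_exp (by linarith [ht2.2])).1 h3
      linarith
    have hb := hμ (1 - Real.exp (-u)) ⟨h1, by linarith⟩
    rw [Real.rpow_one, Real.rpow_one] at hb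
    have hlog : Real.log (2 / (1 - (1 - Real.exp (-u)))) = Real.log 2 + u := by
      rw [_root_.sub_sub_cancel, Real.log_div (by norm_num) hE.ne', Real.log_exp]
      ring
    rw [hlog, _root_.sub_sub_cancel] at hb
    set m := (μ (Ico (1 - Real.exp (-u)) 1)).toReal with hm
    have hm0 : 0 ≤ m := ENNReal.toReal_nonneg
    have hm' : μ (Ico (1 - Real.exp (-u)) 1) = ENNReal.ofReal m := by
      rw [hm, ENNReal.ofReal_toReal (measure_ne_top _ _)]
    have hm2 : m ≤ 2 * C * Real.exp (-u) := by nlinarith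
    calc ν {t | u ≤ -Real.log (1 - t)} * ENNReal.ofReal (g u)
        ≤ ENNReal.ofReal m * ENNReal.ofReal (g u) := by
          rw [← hm']; gcongr
      _ = ENNReal.ofReal (m * g u) := by rw [ENNReal.ofReal_mul hm0]
      _ ≤ _ := by
        apply ENNReal.ofReal_le_ofReal
        simp only [g]
        calc m * (n * (1 - Real.exp (-u)) ^ (n - 1) * Real.exp (-u) * (Real.log 2 + u)
              + (1 - Real.exp (-u)) ^ n)
            = (m * (Real.log 2 + u)) * (n * (1 - Real.exp (-u)) ^ (n - 1) * Real.exp (-u))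
              + m * (1 - Real.exp (-u)) ^ n := by ring
          _ ≤ (C * Real.exp (-u)) * (n * (1 - Real.exp (-u)) ^ (n - 1) * Real.exp (-u))
              + (2 * C * Real.exp (-u)) * (1 - Real.exp (-u)) ^ n := by gcongr
          _ = _ := by ring
  have hpt : ∀ t ∈ Ico (0:ℝ) 1, ENNReal.ofReal (t ^ n * Lw t) ≤
      ENNReal.ofReal (Real.log 2 / (n + 1)) +
        ENNReal.ofReal (∫ u in (0:ℝ)..(-Real.log (1 - t)), g u) := by
    intro t ht
    have hF := intervalIntegral.integral_eq_sub_of_hasDerivAt (a := 0) (b := -Real.log (1 - t))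
      (fun u _ => H_deriv n u) (hgc.intervalIntegrable _ _)
    refine le_trans ?_ ENNReal.ofReal_add_le
    apply ENNReal.ofReal_le_ofReal
    simp only [g]
    rw [hF, neg_neg, Real.exp_log (by linarith [ht.2]), _root_.sub_sub_cancel, Lw_eq ht.2]
    have : (0:ℝ) ^ n * Real.log 2 ≤ Real.log 2 / (n + 1) := by
      rcases n with _ | n
      · simp
      · simp; positivity
    simp
    linarith
  calc ∫⁻ t, ENNReal.ofReal (t ^ n * Lw t) ∂ν
      ≤ ∫⁻ t, (ENNReal.ofReal (Real.log 2 / (n + 1)) +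
        ENNReal.ofReal (∫ u in (0:ℝ)..(-Real.log (1 - t)), g u)) ∂ν :=
        setLIntegral_mono' measurableSet_Ico hpt
    _ = ENNReal.ofReal (Real.log 2 / (n + 1)) * ν univ +
        ∫⁻ t, ENNReal.ofReal (∫ u in (0:ℝ)..(-Real.log (1 - t)), g u) ∂ν := by
        rw [lintegral_add_left measurable_const, lintegral_const]
    _ ≤ ENNReal.ofReal (Real.log 2 / (n + 1)) * ENNReal.ofReal (μ (Ico 0 1)).toReal +
        ENNReal.ofReal (3 * C / (n + 1)) := by
        rw [hlayer, hν, Measure.restrict_apply_univ, ENNReal.ofReal_toReal (measure_ne_top _ _)]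
        gcongr
    _ = _ := by
        rw [← ENNReal.ofReal_mul (by positivity), ← ENNReal.ofReal_add (by positivity) (by positivity)]
        congr 1
        ring

lemma int_pow (μ : Measure ℝ) [IsFiniteMeasure μ] (n : ℕ) :
    IntegrableOn (fun t : ℝ => t ^ n) (Ico (0:ℝ) 1) μ := by
  refine Measure.integrableOn_of_bounded (M := 1) (measure_ne_top _ _) (by fun_prop) ?_
  refine (ae_restrict_iff' measurableSet_Ico).2 (Filter.Eventually.of_forall fun t ht => ?_)
  rw [norm_pow, Real.norm_of_nonneg ht.1]
  exact pow_le_one₀ ht.1 ht.2.le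

lemma mom_nonneg (μ : Measure ℝ) (n : ℕ) : 0 ≤ mom μ n :=
  setIntegral_nonneg measurableSet_Ico fun t ht => pow_nonneg ht.1 n

lemma mom_anti (μ : Measure ℝ) [IsFiniteMeasure μ] (n k : ℕ) : mom μ (n + k) ≤ mom μ k := by
  apply setIntegral_mono_on (int_pow μ _) (int_pow μ _) measurableSet_Ico
  intro t ht
  exact pow_le_pow_of_le_one ht.1 ht.2.le (by omega)

lemma meas_f {f : ℂ → ℂ} (hf : DifferentiableOn ℂ f (ball (0:ℂ) 1)) (μ : Measure ℝ) :
    AEStronglyMeasurable (fun t : ℝ => f t) (μ.restrict (Ico (0:ℝ) 1)) := by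
  apply ContinuousOn.aestronglyMeasurable _ measurableSet_Ico
  exact hf.continuousOn.comp Complex.continuous_ofReal.continuousOn (fun t ht => ofReal_mem ht)

lemma int_term (μ : Measure ℝ) [IsFiniteMeasure μ] (a : ℂ) (n : ℕ) :
    Integrable (fun t : ℝ => a * (t:ℂ) ^ n) (μ.restrict (Ico (0:ℝ) 1)) := by
  have := ((int_pow μ n).ofReal (𝕜 := ℂ)).const_mul a
  simpa using this

lemma norm_term (μ : Measure ℝ) [IsFiniteMeasure μ] (a : ℂ) (n : ℕ) :
    ∫ t in Ico (0:ℝ) 1, ‖a * (t:ℂ) ^ n‖ ∂μ = mom μ n * ‖a‖ := by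
  unfold mom
  rw [mul_comm, ← integral_const_mul]
  apply setIntegral_congr_fun measurableSet_Ico
  intro t ht
  simp [abs_of_nonneg ht.1]

lemma fubini_int {μ : Measure ℝ} [IsFiniteMeasure μ] {f : ℂ → ℂ}
    (hf : DifferentiableOn ℂ f (ball (0:ℂ) 1))
    (hs : Summable fun k => mom μ k * ‖tc f k‖) :
    IntegrableOn (fun t : ℝ => f t) (Ico (0:ℝ) 1) μ := by
  refine ⟨meas_f hf μ, ?_⟩
  have h1 : ∫⁻ t in Ico (0:ℝ) 1, ‖f t‖ₑ ∂μ ≤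
      ∫⁻ t in Ico (0:ℝ) 1, ∑' k, ‖tc f k * (t:ℂ) ^ k‖ₑ ∂μ := by
    apply setLIntegral_mono' measurableSet_Ico
    intro t ht
    rw [← (tc_hasSum hf (ofReal_mem ht)).tsum_eq]
    exact enorm_tsum_le_tsum_enorm
  refine lt_of_le_of_lt h1 ?_
  rw [lintegral_tsum (fun k => by fun_prop)]
  have h2 : ∀ k, ∫⁻ t in Ico (0:ℝ) 1, ‖tc f k * (t:ℂ) ^ k‖ₑ ∂μ
      = ENNReal.ofReal (mom μ k * ‖tc f k‖) := by
    intro k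
    rw [← ofReal_integral_norm_eq_lintegral_enorm (int_term μ _ k), norm_term]
  simp_rw [h2]
  exact hs.tsum_ofReal_lt_top

lemma fubini_coef {μ : Measure ℝ} [IsFiniteMeasure μ] {f : ℂ → ℂ}
    (hf : DifferentiableOn ℂ f (ball (0:ℂ) 1))
    (hs : Summable fun k => mom μ k * ‖tc f k‖) (n : ℕ) :
    hmuCoeff μ f n = ∫ t in Ico (0:ℝ) 1, (t:ℂ) ^ n * f t ∂μ := by
  have h := hasSum_integral_of_summable_integral_norm (μ := μ.restrict (Ico (0:ℝ) 1))
    (F := fun k (t : ℝ) => tc f k * (t:ℂ) ^ (n + k)) (fun k => int_term μ _ _) (by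
      simp_rw [norm_term]
      refine Summable.of_nonneg_of_le
        (fun k => mul_nonneg (mom_nonneg _ _) (norm_nonneg _)) (fun k => ?_) hs
      gcongr
      exact mom_anti μ n k)
  have e1 : ∀ k, ∫ t in Ico (0:ℝ) 1, tc f k * (t:ℂ) ^ (n + k) ∂μ
      = (mom μ (n + k) : ℂ) * tc f k := by
    intro k
    rw [integral_const_mul, mom, mul_comm, ← integral_complex_ofReal]
    simp
  simp_rw [e1] at h
  unfold hmuCoeff
  rw [h.tsum_eq]
  apply setIntegral_congr_fun measurableSet_Ico
  intro t ht
  have h2 := (tc_hasSum hf (ofReal_mem ht)).mul_left ((t:ℂ) ^ n)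
  have e3 : (fun k => tc f k * (t:ℂ) ^ (n + k)) = fun k => (t:ℂ) ^ n * (tc f k * (t:ℂ) ^ k) := by
    funext k
    ring
  simp only [e3]
  exact h2.tsum_eq

lemma one_sub_bound {t : ℝ} (ht : t ∈ Ico (0:ℝ) 1) {z : ℂ} (hz : ‖z‖ < 1) :
    ‖(t:ℂ) * z‖ ≤ ‖z‖ ∧ 1 - ‖z‖ ≤ ‖1 - (t:ℂ) * z‖ := by
  have h1 : ‖(t:ℂ) * z‖ ≤ ‖z‖ := by
    rw [norm_mul, Complex.norm_real, Real.norm_of_nonneg ht.1]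
    nlinarith [ht.2, norm_nonneg z]
  refine ⟨h1, ?_⟩
  have := norm_sub_norm_le (1:ℂ) ((t:ℂ) * z)
  rw [norm_one] at this
  linarith

lemma imuWD_of_int {μ : Measure ℝ} {f : ℂ → ℂ}
    (hi : IntegrableOn (fun t : ℝ => f t) (Ico (0:ℝ) 1) μ) : ImuWD μ f := by
  intro z hz
  have hz1 : ‖z‖ < 1 := by simpa using hz
  have h := Integrable.bdd_mul (f := fun t : ℝ => (1 - (t:ℂ) * z)⁻¹) (c := (1 - ‖z‖)⁻¹) hi
    (by
      apply Measurable.aestronglyMeasurable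
      fun_prop)
    (by
      refine (ae_restrict_iff' measurableSet_Ico).2 (Filter.Eventually.of_forall fun t ht => ?_)
      rw [norm_inv]
      have := (one_sub_bound ht hz1).2
      have : 0 < 1 - ‖z‖ := by linarith
      gcongr)
  refine h.congr (Filter.Eventually.of_forall fun t => ?_)
  simp only [div_eq_mul_inv, mul_comm]

lemma int_pow_mul {μ : Measure ℝ} {f : ℂ → ℂ}
    (hi : IntegrableOn (fun t : ℝ => f t) (Ico (0:ℝ) 1) μ) (n : ℕ) :
    IntegrableOn (fun t : ℝ => (t:ℂ) ^ n * f t) (Ico (0:ℝ) 1) μ := by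
  refine Integrable.bdd_mul (c := 1) hi (by
      apply Measurable.aestronglyMeasurable
      fun_prop) ?_
  refine (ae_restrict_iff' measurableSet_Ico).2 (Filter.Eventually.of_forall fun t ht => ?_)
  rw [norm_pow, Complex.norm_real, Real.norm_of_nonneg ht.1]
  exact pow_le_one₀ ht.1 ht.2.le

lemma imu_hasSum {μ : Measure ℝ} {f : ℂ → ℂ}
    (hi : IntegrableOn (fun t : ℝ => f t) (Ico (0:ℝ) 1) μ) :
    ∀ z ∈ ball (0:ℂ) 1, HasSum (fun n => (∫ t in Ico (0:ℝ) 1, (t:ℂ) ^ n * f t ∂μ) * z ^ n)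
      (Imu μ f z) := by
  intro z hz
  have hz1 : ‖z‖ < 1 := by simpa using hz
  have h := hasSum_integral_of_summable_integral_norm (μ := μ.restrict (Ico (0:ℝ) 1))
    (F := fun n (t : ℝ) => (t:ℂ) ^ n * f t * z ^ n) (fun n => (int_pow_mul hi n).mul_const _) (by
      have hg := (summable_geometric_of_lt_one (norm_nonneg z) hz1).mul_left
        (∫ t in Ico (0:ℝ) 1, ‖f t‖ ∂μ)
      refine Summable.of_nonneg_of_le
        (fun k => integral_nonneg fun t => norm_nonneg _) (fun k => ?_) hg
      rw [← integral_mul_const]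
      apply setIntegral_mono_on ((int_pow_mul hi k).mul_const _).norm (hi.norm.mul_const _)
        measurableSet_Ico
      intro t ht
      rw [norm_mul, norm_mul, norm_pow, norm_pow, Complex.norm_real, Real.norm_of_nonneg ht.1]
      have := pow_le_one₀ (n := k) ht.1 ht.2.le
      gcongr
      exact mul_le_of_le_one_left (norm_nonneg _) this)
  have e : (∫ t in Ico (0:ℝ) 1, ∑' n : ℕ, (t:ℂ) ^ n * f t * z ^ n ∂μ) = Imu μ f z := by
    apply setIntegral_congr_fun measurableSet_Ico
    intro t ht
    have hb := (one_sub_bound ht hz1).1.trans_lt hz1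
    have h2 := (hasSum_geometric_of_norm_lt_one hb).mul_left (f t)
    have e3 : (fun n => (t:ℂ) ^ n * f t * z ^ n) = fun n => f t * ((t:ℂ) * z) ^ n := by
      funext n
      ring
    simp only [e3]
    rw [h2.tsum_eq, div_eq_mul_inv]
  rw [e] at h
  simpa only [integral_mul_const] using h

lemma Lw_nonneg {t : ℝ} (ht : t ∈ Ico (0:ℝ) 1) : 0 ≤ Lw t := by
  have := Real.log_nonpos (x := 1 - t) (by linarith [ht.2]) (by linarith [ht.1])
  rw [Lw_eq ht.2]
  have := Real.log_two_gt_d9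
  linarith

lemma Lw_int {μ : Measure ℝ} {A : ℝ} (hA : 0 < A) {n : ℕ}
    (h : ∫⁻ t in Ico (0:ℝ) 1, ENNReal.ofReal (t ^ n * Lw t) ∂μ ≤ ENNReal.ofReal (A / (n + 1))) :
    IntegrableOn (fun t : ℝ => t ^ n * Lw t) (Ico (0:ℝ) 1) μ ∧
      ∫ t in Ico (0:ℝ) 1, t ^ n * Lw t ∂μ ≤ A / (n + 1) := by
  have hm : Measurable (fun t : ℝ => t ^ n * Lw t) := by
    unfold Lw
    fun_prop
  have hnn : 0 ≤ᵐ[μ.restrict (Ico (0:ℝ) 1)] fun t : ℝ => t ^ n * Lw t :=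
    (ae_restrict_iff' measurableSet_Ico).2 (Filter.Eventually.of_forall fun t ht =>
      mul_nonneg (pow_nonneg ht.1 _) (Lw_nonneg ht))
  constructor
  · refine ⟨hm.aestronglyMeasurable, ?_⟩
    rw [hasFiniteIntegral_iff_ofReal hnn]
    exact lt_of_le_of_lt h ENNReal.ofReal_lt_top
  · rw [integral_eq_lintegral_of_nonneg_ae hnn hm.aestronglyMeasurable]
    exact ENNReal.toReal_le_of_le_ofReal (by positivity) h

lemma norm_le_Lw {f : ℂ → ℂ} (hf : MemLambda f) {t : ℝ} (ht : t ∈ Ico (0:ℝ) 1) :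
    ‖f t‖ ≤ 2 * lambdaNorm f * Lw t := by
  have h := tc_hasSum hf.1 (ofReal_mem ht)
  refine le_of_tendsto' h.tendsto_sum_nat.norm fun N => ?_
  refine le_trans (norm_sum_le _ _) ?_
  refine le_trans (le_of_eq ?_) (growth hf ht N)
  apply Finset.sum_congr rfl
  intro k _
  simp [abs_of_nonneg ht.1]

lemma main_bound {μ : Measure ℝ} [IsFiniteMeasure μ] (h : IsLogCarleson μ 1 1) :
    ∃ A > 0, ∀ f : ℂ → ℂ, MemLambda f → (Summable fun k => mom μ k * ‖tc f k‖) ∧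
      ∀ n : ℕ, ‖hmuCoeff μ f n‖ ≤ 2 * lambdaNorm f * (A / (n + 1)) := by
  obtain ⟨A, hA, hb⟩ := carleson_int μ h
  refine ⟨A, hA, fun f hf => ?_⟩
  have hN : 0 ≤ lambdaNorm f := by
    rw [lambdaNorm_eq]
    have := lamSemi_nonneg hf
    positivity
  have hL0 : IntegrableOn (fun t : ℝ => Lw t) (Ico (0:ℝ) 1) μ := by
    simpa using (Lw_int hA (hb 0)).1
  have hs : Summable fun k => mom μ k * ‖tc f k‖ := by
    apply summable_of_sum_range_le (c := ∫ t in Ico (0:ℝ) 1, 2 * lambdaNorm f * Lw t ∂μ)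
      (fun k => mul_nonneg (mom_nonneg _ _) (norm_nonneg _))
    intro N
    have e : ∑ k ∈ Finset.range N, mom μ k * ‖tc f k‖
        = ∫ t in Ico (0:ℝ) 1, ∑ k ∈ Finset.range N, ‖tc f k‖ * t ^ k ∂μ := by
      rw [integral_finsetSum _ (fun k _ => (int_pow μ k).const_mul _)]
      apply Finset.sum_congr rfl
      intro k _
      rw [integral_const_mul, mul_comm, mom]
    rw [e]
    apply setIntegral_mono_on
      (integrable_finsetSum _ (fun k _ => (int_pow μ k).const_mul _)) (hL0.const_mul _)
      measurableSet_Ico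
    intro t ht
    exact growth hf ht N
  refine ⟨hs, fun n => ?_⟩
  obtain ⟨hi, hle⟩ := Lw_int hA (hb n)
  rw [fubini_coef hf.1 hs n]
  refine le_trans (norm_integral_le_of_norm_le (hi.const_mul (2 * lambdaNorm f)) ?_) ?_
  · refine (ae_restrict_iff' measurableSet_Ico).2 (Filter.Eventually.of_forall fun t ht => ?_)
    rw [norm_mul, norm_pow, Complex.norm_real, Real.norm_of_nonneg ht.1]
    have h1 := norm_le_Lw hf ht
    have h2 := pow_nonneg ht.1 n
    calc t ^ n * ‖f t‖ ≤ t ^ n * (2 * lambdaNorm f * Lw t) := by gcongr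
      _ = _ := by ring
  · rw [integral_const_mul]
    gcongr

lemma forward {μ : Measure ℝ} [IsFiniteMeasure μ] (h : IsLogCarleson μ 1 1) :
    ∃ C > 0, ∀ f : ℂ → ℂ, MemLambda f →
      (ImuWD μ f ∧ HmuWD μ f) ∧ (MemLambda (Imu μ f) ∧ MemLambda (Hmu μ f)) ∧
      lambdaNorm (Imu μ f) ≤ C * lambdaNorm f ∧ lambdaNorm (Hmu μ f) ≤ C * lambdaNorm f := by
  obtain ⟨A, hA, hb⟩ := main_bound h
  refine ⟨4 * A, by positivity, fun f hf => ?_⟩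
  obtain ⟨hs, hc⟩ := hb f hf
  have hN : 0 ≤ lambdaNorm f := by
    rw [lambdaNorm_eq]
    have := lamSemi_nonneg hf
    positivity
  have hi := fubini_int hf.1 hs
  have hI := imu_hasSum hi
  simp_rw [← fubini_coef hf.1 hs] at hI
  have hH : ∀ z ∈ ball (0:ℂ) 1, HasSum (fun n => hmuCoeff μ f n * z ^ n) (Hmu μ f z) :=
    fun z hz => (hI z hz).summable.hasSum
  have hB : (0:ℝ) ≤ 2 * lambdaNorm f * A := by positivity
  have hcB : ∀ n : ℕ, ((n:ℝ) + 1) * ‖hmuCoeff μ f (n + 1)‖ ≤ 2 * lambdaNorm f * A := by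
    intro n
    have h1 := hc (n + 1)
    push_cast at h1
    calc ((n:ℝ) + 1) * ‖hmuCoeff μ f (n + 1)‖
        ≤ ((n:ℝ) + 1) * (2 * lambdaNorm f * (A / (n + 1 + 1))) := by gcongr
      _ = (2 * lambdaNorm f * A) * (((n:ℝ) + 1) / (n + 1 + 1)) := by ring
      _ ≤ (2 * lambdaNorm f * A) * 1 := by
        gcongr
        rw [div_le_one (by positivity)]
        linarith
      _ = _ := by ring
  have h0 : ‖hmuCoeff μ f 0‖ ≤ 2 * lambdaNorm f * A := by simpa using hc 0
  have r1 := memLambda_of_coef hI hB hcB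
  have r2 := memLambda_of_coef hH hB hcB
  refine ⟨⟨imuWD_of_int hi, ?_, ?_⟩, ⟨r1.1, r2.1⟩, ?_, ?_⟩
  · intro n
    refine Summable.of_nonneg_of_le (fun k => norm_nonneg _) (fun k => ?_) hs
    rw [norm_mul, Complex.norm_real, Real.norm_of_nonneg (mom_nonneg _ _)]
    gcongr
    exact mom_anti μ n k
  · intro z hz
    exact (hI z hz).summable.norm
  · linarith [r1.2]
  · linarith [r2.2]

/-- The test function. -/
def tf (z : ℂ) : ℂ := -Complex.log (1 - z)

lemma tf_hasSum : ∀ z ∈ ball (0:ℂ) 1, HasSum (fun n : ℕ => (1 / (n:ℂ)) * z ^ n) (tf z) := by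
  intro z hz
  have := Complex.hasSum_taylorSeries_neg_log (z := z) (by simpa using hz)
  refine this.congr_fun ?_
  intro n
  ring

lemma tf_mem : MemLambda tf := by
  refine (memLambda_of_coef tf_hasSum zero_le_one ?_).1
  intro n
  have hn : (n:ℝ) + 1 ≠ 0 := by positivity
  have : ‖(1 / ((n + 1 : ℕ):ℂ))‖ = 1 / ((n:ℝ) + 1) := by
    rw [norm_div, norm_one, Complex.norm_natCast]
    push_cast
    rfl
  rw [this]
  field_simp
  exact le_rfl

lemma tf_real {t : ℝ} (ht : t ∈ Ico (0:ℝ) 1) : tf t = ((-Real.log (1 - t) : ℝ) : ℂ) := by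
  unfold tf
  rw [Complex.ofReal_neg, Complex.ofReal_log (by linarith [ht.2])]
  simp

lemma sum_sq_ge (N : ℕ) : (N:ℝ) ^ 3 / 3 ≤ ∑ n ∈ Finset.range N, ((n:ℝ) + 1) ^ 2 := by
  induction N with
  | zero => simp
  | succ k ih =>
    rw [Finset.sum_range_succ]
    push_cast
    have : (0:ℝ) ≤ k := by positivity
    nlinarith

lemma decay {G : ℂ → ℂ} (hG : MemLambda G) {b : ℕ → ℝ} (hb0 : ∀ n, 0 ≤ b n) (hanti : Antitone b)
    (hb : ∀ n, ‖tc G n‖ = b n) (N : ℕ) (hN : 1 ≤ N) : (N:ℝ) * b N ≤ 5 * lamSemi G := by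
  have hN1 : (1:ℝ) ≤ N := by exact_mod_cast hN
  set r : ℝ := 1 - 1 / (4 * N) with hr
  have hq : 1 / (4 * (N:ℝ)) ≤ 1 / 4 := by
    apply one_div_le_one_div_of_le <;> linarith
  have hq0 : 0 < 1 / (4 * (N:ℝ)) := by positivity
  have hrm : r ∈ Ico (0:ℝ) 1 := ⟨by linarith, by linarith⟩
  have h1 := lam_partial hG hrm N
  have hpow : 1 / 2 ≤ r ^ (2 * N) := by
    have := one_add_mul_le_pow (a := -(1 / (4 * (N:ℝ)))) (by linarith) (2 * N)
    have e : 1 + ((2 * N : ℕ):ℝ) * -(1 / (4 * (N:ℝ))) = 1 / 2 := by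
      push_cast
      field_simp
      norm_num
    rw [e] at this
    rw [hr, sub_eq_add_neg]
    exact this
  have h2 : ∑ n ∈ Finset.range N, ((n:ℝ) + 1) ^ 2 * (b N ^ 2 / 2) ≤
      ∑ n ∈ Finset.range N, (((n:ℝ) + 1) * ‖tc G (n + 1)‖) ^ 2 * r ^ (2 * n) := by
    apply Finset.sum_le_sum
    intro n hn
    have hn' : n < N := Finset.mem_range.1 hn
    rw [hb, mul_pow, mul_assoc]
    have h3 : b N ≤ b (n + 1) := hanti (by omega)
    have h4 : r ^ (2 * N) ≤ r ^ (2 * n) := pow_le_pow_of_le_one hrm.1 hrm.2.le (by omega)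
    have h5 : 1 / 2 ≤ r ^ (2 * n) := by linarith
    have h6 := hb0 N
    calc ((n:ℝ) + 1) ^ 2 * (b N ^ 2 / 2) = ((n:ℝ) + 1) ^ 2 * (b N ^ 2 * (1 / 2)) := by ring
      _ ≤ _ := by gcongr
  rw [← Finset.sum_mul] at h2
  have h3 := sum_sq_ge N
  have hb2 : 0 ≤ b N ^ 2 / 2 := by positivity
  have e1 : 1 - r = 1 / (4 * N) := by rw [hr]; ring
  rw [e1] at h1
  have hK := lamSemi_nonneg hG
  apply le_of_sq_le_sq _ (by positivity)
  have h4 : 1 / (4 * (N:ℝ)) * ((N:ℝ) ^ 3 / 3 * (b N ^ 2 / 2)) ≤ lamSemi G ^ 2 := by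
    refine le_trans ?_ h1
    gcongr
    refine le_trans ?_ h2
    gcongr
  have e2 : 1 / (4 * (N:ℝ)) * ((N:ℝ) ^ 3 / 3 * (b N ^ 2 / 2)) = (N * b N) ^ 2 / 24 := by
    field_simp
    ring
  rw [e2] at h4
  nlinarith [sq_nonneg (lamSemi G)]

lemma backward {μ : Measure ℝ} [IsFiniteMeasure μ] (hwd : ImuWD μ tf)
    (hm : MemLambda (Imu μ tf)) : IsLogCarleson μ 1 1 := by
  have hi : IntegrableOn (fun t : ℝ => tf t) (Ico (0:ℝ) 1) μ := by
    simpa using hwd 0 (by simp)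
  have hnn : ∀ t ∈ Ico (0:ℝ) 1, 0 ≤ -Real.log (1 - t) := by
    intro t ht
    have := Real.log_nonpos (x := 1 - t) (by linarith [ht.2]) (by linarith [ht.1])
    linarith
  have hre : ∀ n : ℕ, IntegrableOn (fun t : ℝ => t ^ n * (-Real.log (1 - t))) (Ico (0:ℝ) 1) μ := by
    intro n
    have := (int_pow_mul hi n).re
    refine IntegrableOn.congr_fun this ?_ measurableSet_Ico
    intro t ht
    simp only [tf_real ht]
    rw [← Complex.ofReal_pow, ← Complex.ofReal_mul]
    rfl
  set b : ℕ → ℝ := fun n => ∫ t in Ico (0:ℝ) 1, t ^ n * (-Real.log (1 - t)) ∂μ with hbdef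
  have hb0 : ∀ n, 0 ≤ b n := fun n => setIntegral_nonneg measurableSet_Ico
    fun t ht => mul_nonneg (pow_nonneg ht.1 _) (hnn t ht)
  have hanti : Antitone b := by
    intro m n hmn
    apply setIntegral_mono_on (hre n) (hre m) measurableSet_Ico
    intro t ht
    have := hnn t ht
    have := pow_le_pow_of_le_one ht.1 ht.2.le hmn
    gcongr
  have hb : ∀ n, ‖tc (Imu μ tf) n‖ = b n := by
    intro n
    rw [tc_of_hasSum (imu_hasSum hi)]
    have : ∫ t in Ico (0:ℝ) 1, (t:ℂ) ^ n * tf t ∂μ = ((b n : ℝ) : ℂ) := by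
      rw [hbdef]
      simp only
      rw [← integral_complex_ofReal]
      apply setIntegral_congr_fun measurableSet_Ico
      intro t ht
      simp only [tf_real ht]
      push_cast
      rfl
    rw [this, Complex.norm_real, Real.norm_of_nonneg (hb0 n)]
  have hdec := decay hm hb0 hanti hb
  have hK := lamSemi_nonneg hm
  set K := lamSemi (Imu μ tf)
  set M := (μ (Ico (0:ℝ) 1)).toReal with hM
  have hM0 : 0 ≤ M := ENNReal.toReal_nonneg
  refine ⟨80 * K + 4 * M + 1, by positivity, ?_⟩
  intro s hs
  rw [Real.rpow_one, Real.rpow_one]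
  change _ * Lw s ≤ _
  have hs1 : 0 < 1 - s := by linarith [hs.2]
  have hl2 := Real.log_two_lt_d9
  set m := (μ (Ico s 1)).toReal with hmdef
  have hm0 : 0 ≤ m := ENNReal.toReal_nonneg
  have hmM : m ≤ M := ENNReal.toReal_mono (measure_ne_top _ _)
    (measure_mono (Ico_subset_Ico_left hs.1))
  rcases lt_or_ge s (1 / 2) with hlt | hge
  · have h1 : Lw s ≤ 2 := by
      rw [Lw_eq hs.2]
      have : Real.log (1 / 2) ≤ Real.log (1 - s) := Real.log_le_log (by norm_num) (by linarith)
      rw [one_div, Real.log_inv] at this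
      linarith
    have h0 := Lw_nonneg hs
    have : m * Lw s ≤ M * 2 := by gcongr
    nlinarith
  · set N := ⌊1 / (2 * (1 - s))⌋₊ with hNdef
    have hx1 : 1 ≤ 1 / (2 * (1 - s)) := by
      rw [le_div_iff₀ (by positivity)]
      linarith
    have hN1 : 1 ≤ N := Nat.le_floor (by exact_mod_cast hx1)
    have hNle : (N:ℝ) ≤ 1 / (2 * (1 - s)) := Nat.floor_le (by positivity)
    have hNgt : 1 / (2 * (1 - s)) < N + 1 := Nat.lt_floor_add_one _
    have hN1' : (1:ℝ) ≤ N := by exact_mod_cast hN1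
    have hNle' : (N:ℝ) * (1 - s) ≤ 1 / 2 := by
      rw [le_div_iff₀ (by positivity)] at hNle
      linarith
    have hNgt' : 1 ≤ 4 * N * (1 - s) := by
      rw [div_lt_iff₀ (by positivity)] at hNgt
      nlinarith
    have hpow : 1 / 2 ≤ s ^ N := by
      have := one_add_mul_le_pow (a := -(1 - s)) (by linarith [hs.1]) N
      have e : 1 + -(1 - s) = s := by ring
      rw [e] at this
      linarith
    have hl := hnn s hs
    have hlow : m * (1 / 2 * (-Real.log (1 - s))) ≤ b N := by
      have h1 : ∫ t in Ico s 1, (1 / 2 * (-Real.log (1 - s))) ∂μ ≤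
          ∫ t in Ico s 1, t ^ N * (-Real.log (1 - t)) ∂μ := by
        apply setIntegral_mono_on (integrableOn_const (measure_ne_top _ _))
          ((hre N).mono_set (Ico_subset_Ico_left hs.1)) measurableSet_Ico
        intro t ht
        have h2 : s ^ N ≤ t ^ N := pow_le_pow_left₀ hs.1 ht.1 N
        have h3 : Real.log (1 - t) ≤ Real.log (1 - s) :=
          Real.log_le_log (by linarith [ht.2]) (by linarith [ht.1])
        have h4 : 1 / 2 ≤ t ^ N := by linarith
        gcongr
      rw [setIntegral_const, smul_eq_mul] at h1
      refine le_trans h1 ?_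
      apply setIntegral_mono_set (hre N)
      · exact (ae_restrict_iff' measurableSet_Ico).2 (Filter.Eventually.of_forall fun t ht =>
          mul_nonneg (pow_nonneg ht.1 _) (hnn t ht))
      · exact (Ico_subset_Ico_left hs.1).eventuallyLE
    have hL : Lw s ≤ 2 * (-Real.log (1 - s)) := by
      rw [Lw_eq hs.2]
      have : Real.log (1 - s) ≤ Real.log (1 / 2) := Real.log_le_log hs1 (by linarith)
      rw [one_div, Real.log_inv] at this
      linarith
    have h5 := hdec N hN1
    have h6 : m * Lw s ≤ 4 * b N := by
      have : m * Lw s ≤ m * (2 * (-Real.log (1 - s))) := by gcongr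
      linarith
    have h7 : b N ≤ 4 * (1 - s) * (N * b N) := by
      have := mul_le_mul_of_nonneg_right hNgt' (hb0 N)
      linarith
    have h8 : 4 * (1 - s) * (N * b N) ≤ 4 * (1 - s) * (5 * K) := by gcongr
    nlinarith [mul_nonneg hM0 hs1.le]


/-- Theorem 3.4 for `X = Λ²_{1/2}`: boundedness of `I_μ` and of `H_μ` on `Λ²_{1/2}` is
equivalent to `μ` being a `1`-logarithmic `1`-Carleson measure. -/
theorem imu_hmu_lambda_tfae (μ : Measure ℝ) [IsFiniteMeasure μ]
    (hsupp : μ (Ico (0:ℝ) 1)ᶜ = 0) :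
    [ (∀ f : ℂ → ℂ, MemLambda f → ImuWD μ f ∧ MemLambda (Imu μ f)) ∧
        ∃ C > 0, ∀ f : ℂ → ℂ, MemLambda f → lambdaNorm (Imu μ f) ≤ C * lambdaNorm f,
      (∀ f : ℂ → ℂ, MemLambda f → HmuWD μ f ∧ MemLambda (Hmu μ f)) ∧
        ∃ C > 0, ∀ f : ℂ → ℂ, MemLambda f → lambdaNorm (Hmu μ f) ≤ C * lambdaNorm f,
      IsLogCarleson μ 1 1 ].TFAE := by
  tfae_have 3 → 1 := by
    intro h
    obtain ⟨C, hC, hb⟩ := forward h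
    exact ⟨fun f hf => ⟨(hb f hf).1.1, (hb f hf).2.1.1⟩, C, hC, fun f hf => (hb f hf).2.2.1⟩
  tfae_have 3 → 2 := by
    intro h
    obtain ⟨C, hC, hb⟩ := forward h
    exact ⟨fun f hf => ⟨(hb f hf).1.2, (hb f hf).2.1.2⟩, C, hC, fun f hf => (hb f hf).2.2.2⟩
  tfae_have 1 → 3 := by
    rintro ⟨h, -⟩
    exact backward (h tf tf_mem).1 (h tf tf_mem).2
  tfae_have 2 → 3 := by
    rintro ⟨h, -⟩
    obtain ⟨hwd, hm⟩ := h tf tf_mem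
    have hs : Summable fun k => mom μ k * ‖tc tf k‖ := by
      have := hwd.1 0
      simpa [abs_of_nonneg (mom_nonneg μ _)] using this
    have hi := fubini_int tf_mem.1 hs
    have hI := imu_hasSum hi
    simp_rw [← fubini_coef tf_mem.1 hs] at hI
    have heq : EqOn (Imu μ tf) (Hmu μ tf) (ball (0:ℂ) 1) := fun z hz => (hI z hz).tsum_eq.symm
    refine backward (imuWD_of_int hi) ⟨hm.1.congr heq, ?_⟩
    obtain ⟨C, hC⟩ := hm.2
    refine ⟨C, fun r hr => ?_⟩
    have e : M2 (deriv (Imu μ tf)) r = M2 (deriv (Hmu μ tf)) r := by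
      unfold M2
      have : ∀ θ : ℝ, deriv (Imu μ tf) (r * Complex.exp (θ * Complex.I))
          = deriv (Hmu μ tf) (r * Complex.exp (θ * Complex.I)) := by
        intro θ
        apply Filter.EventuallyEq.deriv_eq
        apply heq.eventuallyEq_of_mem
        apply isOpen_ball.mem_nhds
        simp [Complex.norm_exp_ofReal_mul_I, abs_of_nonneg hr.1, hr.2]
      simp_rw [this]
    rw [e]
    exact hC r hr
  tfae_finish

end PaperHankel
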